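/- Let (d,v,u) be an admissible triple for (λ,μ). Then dv^{−1} ∈ D_{B,J}, i.e. dv^{−1} is a distinguished double (W_B, W_J)-coset representative in W_r. -/

import Mathlib

/-!
Write `p = w⁻¹ i` and `q = w⁻¹ (i + 1)`.  For `w ∈ W_r` and `1 ≤ i < r` the root `αᵢ·w` is
`e_q − e_p` (with `e_{−k} = −e_k`), and it is positive exactly when `p < q`
(`isPos_rAct_sroot`).  So all the conditions in the theorem become monotonicity statements for
permutations of `{±1, …, ±r}`.

Call `[1, a]`, `[a+1, r]` and their negatives the blocks.  The element `v ∈ W_A` preserves each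
block, and `d⁻¹ ∈ D_Ã` says that `d` is increasing on each block.

* `(dv⁻¹)⁻¹ ∈ D_J`: for `αⱼ ∈ J` the integers `j` and `j + 1` lie in one block, hence so do
  `v⁻¹ j < v⁻¹ (j + 1)`, and `d` is increasing there.
* `dv⁻¹ ∈ D_B`: let `αᵢ ∈ B`, so that `p = d⁻¹ i < q = d⁻¹ (i + 1)`.  If `p` and `q` lie in
  different blocks, then `v p < v q` because `v` preserves blocks and these are ordered intervals.
  If they lie in the same block, then `q = p + 1`, since an integer strictly between them would be
  sent by `d` strictly between `i` and `i + 1`.  Thus `αᵢ·d ∈ B·d ∩ A`, and `v p < v q` is the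
  hypothesis on `v⁻¹`.
-/

/- The hyperoctahedral group `W_r` (the Weyl group of type `B_r`), realized as the group
of permutations `w` of `{±1, …, ±r}` satisfying `(−i)w = −(iw)`.  We realize its elements
inside `Equiv.Perm ℤ`, letting `w` act on `i` on the *right* via `i·w := w⁻¹ i` (so that
`i·(wd) = (i·w)·d` and products of group elements can be written in the same order as in
the paper). -/

namespace QQS

abbrev G : Type := Equiv.Perm ℤ

/-- The generators `s₀ = (1,−1)` and `sᵢ = (i,i+1)(−i,−i−1)`. -/
def s (i : ℕ) : G :=
  if i = 0 then Equiv.swap 1 (-1)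
  else Equiv.swap (i : ℤ) ((i : ℤ) + 1) * Equiv.swap (-(i : ℤ)) (-((i : ℤ) + 1))

/-- The generating set `{s₀, s₁, …, s_{r−1}}` of `W_r`. -/
def gens (r : ℕ) : Set G := {x | ∃ i, i < r ∧ x = s i}

/-- Membership in `W_r`: permutations of `{±1, …, ±r}` commuting with negation. -/
def inW (r : ℕ) (w : G) : Prop :=
  (∀ i : ℤ, w (-i) = -(w i)) ∧ ∀ i : ℤ, (r : ℤ) < |i| → w i = i

/-- The length `ℓ(w)` of `w ∈ W_r` with respect to the generators `s₀, …, s_{r−1}`. -/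
noncomputable def len (r : ℕ) (w : G) : ℕ :=
  sInf {n | ∃ l : List G, l.length = n ∧ (∀ x ∈ l, x ∈ gens r) ∧ l.prod = w}

/-- The partial sum of the first `k` parts of a composition. -/
def psum (l : List ℕ) (k : ℕ) : ℕ := (l.take k).sum

end QQS
namespace QQS

/- The root system of type `B_r`.  `W_r` acts on the vector space `V` with basis
`e₁, …, e_r`; we realize a vector `x = ∑ xᵢ eᵢ ∈ V` as the odd function `ℤ → ℚ` with
value `xᵢ` at `i` and `−xᵢ` at `−i`.  The (right) action of `w` on `V` determined by
`eᵢ·w = e_{i·w}` if `i·w > 0` and `eᵢ·w = −e_{−(i·w)}` if `i·w < 0` then becomes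
`x·w = x ∘ w`. -/

/-- The basis vector `eᵢ`, as an odd function `ℤ → ℚ`. -/
def evec (i : ℕ) : ℤ → ℚ := fun j => if j = (i : ℤ) then 1 else if j = -(i : ℤ) then -1 else 0

/-- The simple roots: `α₀ = e₁` and `αᵢ = e_{i+1} − eᵢ` for `i ≥ 1`. -/
def sroot : ℕ → (ℤ → ℚ)
  | 0 => evec 1
  | i + 1 => evec (i + 2) - evec (i + 1)

/-- `Δ₀ = {α₀, α₁, …, α_{r−1}}`. -/
def Delta0 (r : ℕ) : Set (ℤ → ℚ) := {x | ∃ i, i < r ∧ x = sroot i}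

/-- `Δ = Δ₀ ∖ {α₀}`. -/
def DeltaS (r : ℕ) : Set (ℤ → ℚ) := Delta0 r \ {sroot 0}

/-- The right action of `w ∈ W_r` on `V`: `x·w = x ∘ w`. -/
def rAct (w : G) (x : ℤ → ℚ) : ℤ → ℚ := fun j => x (w j)

/-- `x` is a positive root: `eᵢ`, `eᵢ + eⱼ` or `eⱼ − eᵢ` with `1 ≤ i < j ≤ r`. -/
def isPos (r : ℕ) (x : ℤ → ℚ) : Prop :=
  (∃ i, 1 ≤ i ∧ i ≤ r ∧ x = evec i) ∨
  (∃ i j, 1 ≤ i ∧ i < j ∧ j ≤ r ∧ (x = evec i + evec j ∨ x = evec j - evec i))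

/-- `D_K = {d ∈ W_r : α·d is a positive root for every α ∈ K}`. -/
def DD (r : ℕ) (K : Set (ℤ → ℚ)) : Set G :=
  {d | inW r d ∧ ∀ α ∈ K, isPos r (rAct d α)}

/-- `D_{K,L} = D_K ∩ D_L⁻¹`. -/
def DDd (r : ℕ) (K L : Set (ℤ → ℚ)) : Set G := {d | d ∈ DD r K ∧ d⁻¹ ∈ DD r L}

/-- For `M ⊆ Δ₀`, the parabolic subgroup `W_M`, generated by the reflections `s_α`
for `α ∈ M` (the reflection in the hyperplane orthogonal to `αᵢ` is `sᵢ`). -/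
def Wpar (r : ℕ) (M : Set (ℤ → ℚ)) : Subgroup G :=
  Subgroup.closure {w | ∃ i, i < r ∧ sroot i ∈ M ∧ w = s i}

/-- `D^M_{K,L} = D_K ∩ D_L⁻¹ ∩ W_M`. -/
def DDm (r : ℕ) (K L M : Set (ℤ → ℚ)) : Set G := {d | d ∈ DDd r K L ∧ d ∈ Wpar r M}

end QQS
namespace QQS

/- Fix an `a`-bicomposition `λ = (l1, l2)` and a `b`-bicomposition `μ = (m1, m2)` in
`Λ(n,r)`.  The sets of simple roots `J, I ⊆ Δ`, and `Ã, B̃, A, B ⊆ Δ₀`. -/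

/-- `j` is a partial sum of the composition `l`. -/
def isPartialSum (l : List ℕ) (j : ℕ) : Prop := ∃ k, psum l k = j

/-- `{α_{off+j} : 1 ≤ j ≤ l.sum − 1, j not a partial sum of l}`. -/
def compRoots (off : ℕ) (l : List ℕ) : Set (ℤ → ℚ) :=
  {x | ∃ j, 1 ≤ j ∧ j + 1 ≤ l.sum ∧ ¬ isPartialSum l j ∧ x = sroot (off + j)}

/-- `J = J₁ ∪ J₂ ⊆ Δ` associated to the bicomposition `(l1, l2)`. -/
def Jset (l1 l2 : List ℕ) : Set (ℤ → ℚ) := compRoots 0 l1 ∪ compRoots l1.sum l2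

/-- `Ã = Δ₀ ∖ {α_a}` if `a ≠ r`, and `Ã = Δ₀` if `a = r`. -/
def Atil (r a : ℕ) : Set (ℤ → ℚ) := if a = r then Delta0 r else Delta0 r \ {sroot a}

/-- `A = Ã ∖ {α₀}`. -/
def Aset (r a : ℕ) : Set (ℤ → ℚ) := Atil r a \ {sroot 0}

/-- An admissible triple `(d, v, u)` for `(λ, μ)`: `d ∈ D_{B̃,Ã}`,
`v ∈ D^A_{J, B·d ∩ A}` and `u ∈ D^B_{I, B ∩ J·v·d⁻¹}`. -/
def Admissible (r a b : ℕ) (l1 l2 m1 m2 : List ℕ) (d v u : G) : Prop :=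
  d ∈ DDd r (Atil r b) (Atil r a) ∧
  v ∈ DDm r (Jset l1 l2) ((rAct d '' Aset r b) ∩ Aset r a) (Aset r a) ∧
  u ∈ DDm r (Jset m1 m2) (Aset r b ∩ (rAct d⁻¹ '' (rAct v '' Jset l1 l2))) (Aset r b)

end QQS
namespace QQS

/-! ### Signed basis vectors and positivity -/

/-- The vector `e_p` for a signed index `p ≠ 0`, with the convention `e_{−k} = −e_k`. -/
def sv (p : ℤ) : ℤ → ℚ := fun j => if j = p then 1 else if j = -p then -1 else 0

lemma sv_neg {p : ℤ} (hp : p ≠ 0) : sv (-p) = -sv p := by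
  funext j
  simp only [sv, Pi.neg_apply, neg_neg]
  split_ifs <;> first | omega | simp

lemma evec_eq_sv (i : ℕ) : evec i = sv i := rfl

lemma sroot_eq_sv {i : ℕ} (hi : 1 ≤ i) : sroot i = sv ((i : ℤ) + 1) - sv i := by
  obtain ⟨k, rfl⟩ : ∃ k, i = k + 1 := ⟨i - 1, by omega⟩
  simp only [sroot, evec_eq_sv]
  push_cast
  rw [add_assoc]
  rfl

/-- A linear functional on `V`, with `e_p ↦ p`; it is positive on positive roots. -/
def wt (r : ℕ) (x : ℤ → ℚ) : ℚ := ∑ j ∈ Finset.Icc 1 r, (j : ℚ) * x j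

lemma wt_add (r : ℕ) (x y : ℤ → ℚ) : wt r (x + y) = wt r x + wt r y := by
  simp [wt, mul_add, Finset.sum_add_distrib]

lemma wt_neg (r : ℕ) (x : ℤ → ℚ) : wt r (-x) = -wt r x := by
  simp [wt]

lemma wt_sub (r : ℕ) (x y : ℤ → ℚ) : wt r (x - y) = wt r x - wt r y := by
  rw [sub_eq_add_neg, wt_add, wt_neg, sub_eq_add_neg]

lemma wt_evec {r i : ℕ} (h1 : 1 ≤ i) (h2 : i ≤ r) : wt r (evec i) = i := by
  unfold wt
  rw [Finset.sum_eq_single i]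
  · simp [evec]
  · intro j hj hji
    rw [Finset.mem_Icc] at hj
    rw [evec, if_neg (by omega), if_neg (by omega), mul_zero]
  · intro h
    exact absurd (Finset.mem_Icc.2 ⟨h1, h2⟩) h

lemma wt_sv {r : ℕ} {p : ℤ} (h1 : p ≠ 0) (h2 : |p| ≤ r) : wt r (sv p) = p := by
  obtain ⟨k, rfl | rfl⟩ := p.eq_nat_or_neg
  · rw [← evec_eq_sv, wt_evec (by omega) (by simpa using h2)]
    simp
  · rw [sv_neg (by omega), wt_neg, ← evec_eq_sv, wt_evec (by omega) (by simpa using h2)]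
    simp

lemma wt_pos {r : ℕ} {x : ℤ → ℚ} (h : isPos r x) : 0 < wt r x := by
  rcases h with ⟨i, h1, h2, rfl⟩ | ⟨i, j, h1, h2, h3, rfl | rfl⟩
  · rw [wt_evec h1 h2]
    exact_mod_cast h1
  · rw [wt_add, wt_evec h1 (by omega), wt_evec (by omega) h3]
    exact_mod_cast (by omega : 0 < i + j)
  · rw [wt_sub, wt_evec h1 (by omega), wt_evec (by omega) h3, sub_pos]
    exact_mod_cast h2

lemma isPos_sv_sub {r : ℕ} {p q : ℤ} (hp : p ≠ 0) (hq : q ≠ 0) (hpr : |p| ≤ r) (hqr : |q| ≤ r)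
    (h1 : q ≠ p) (h2 : q ≠ -p) : isPos r (sv q - sv p) ↔ p < q := by
  constructor
  · intro h
    have := wt_pos h
    rw [wt_sub, wt_sv hp hpr, wt_sv hq hqr, sub_pos] at this
    exact_mod_cast this
  · intro h
    right
    obtain ⟨k, rfl | rfl⟩ := p.eq_nat_or_neg <;> obtain ⟨m, rfl | rfl⟩ := q.eq_nat_or_neg <;>
      simp only [abs_neg, Nat.abs_cast, Nat.cast_le] at hpr hqr
    · exact ⟨k, m, by omega, by omega, by omega, Or.inr rfl⟩
    · omega
    · rw [sv_neg (by omega), sub_neg_eq_add]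
      rcases lt_or_gt_of_ne (show k ≠ m by omega) with hkm | hkm
      · exact ⟨k, m, by omega, hkm, hqr, Or.inl (add_comm _ _)⟩
      · exact ⟨m, k, by omega, hkm, hpr, Or.inl rfl⟩
    · rw [sv_neg (by omega), sv_neg (by omega)]
      exact ⟨m, k, by omega, by omega, hpr, Or.inr (by rw [evec_eq_sv, evec_eq_sv]; abel)⟩

/-! ### The group `W_r` and its action on simple roots -/

lemma inW_mul {r : ℕ} {w w' : G} (h : inW r w) (h' : inW r w') : inW r (w * w') :=
  ⟨fun i => by simp [h.1, h'.1], fun i hi => by simp [h'.2 i hi, h.2 i hi]⟩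

lemma inW_inv {r : ℕ} {w : G} (h : inW r w) : inW r w⁻¹ := by
  refine ⟨fun i => ?_, fun i hi => ?_⟩
  · rw [Equiv.Perm.inv_eq_iff_eq, h.1]
    simp
  · rw [Equiv.Perm.inv_eq_iff_eq, h.2 i hi]

lemma inW_ne_zero {r : ℕ} {w : G} (h : inW r w) {i : ℤ} (hi : i ≠ 0) : w i ≠ 0 := by
  have h0 : w 0 = 0 := by have := h.1 0; simp at this; omega
  intro h'
  exact hi (w.injective (h'.trans h0.symm))

lemma inW_abs_le {r : ℕ} {w : G} (h : inW r w) {i : ℤ} (hi : |i| ≤ r) : |w i| ≤ r := by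
  by_contra! hc
  have := w.injective (h.2 _ hc)
  rw [this] at hc
  omega

lemma rAct_sv {r : ℕ} {w : G} (h : inW r w) (p : ℤ) : rAct w (sv p) = sv (w⁻¹ p) := by
  funext j
  have e1 : w j = p ↔ j = w⁻¹ p := by rw [Equiv.Perm.eq_inv_iff_eq]
  have e2 : w j = -p ↔ j = -w⁻¹ p := by rw [← (inW_inv h).1, Equiv.Perm.eq_inv_iff_eq]
  simp only [rAct, sv, e1, e2]

lemma rAct_sroot {r : ℕ} {w : G} (h : inW r w) {i : ℕ} (hi : 1 ≤ i) :
    rAct w (sroot i) = sv (w⁻¹ (i + 1)) - sv (w⁻¹ i) := by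
  rw [sroot_eq_sv hi, ← rAct_sv h, ← rAct_sv h]
  rfl

lemma isPos_rAct_sroot {r : ℕ} {w : G} (h : inW r w) {i : ℕ} (hi : 1 ≤ i) (hir : i < r) :
    isPos r (rAct w (sroot i)) ↔ w⁻¹ i < w⁻¹ (i + 1) := by
  have h' := inW_inv h
  rw [rAct_sroot h hi]
  refine isPos_sv_sub (inW_ne_zero h' (by omega)) (inW_ne_zero h' (by omega))
    (inW_abs_le h' ?_) (inW_abs_le h' ?_) ?_ ?_
  · rw [abs_le]; omega
  · rw [abs_le]; omega
  · intro he
    have := w⁻¹.injective he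
    omega
  · intro he
    rw [← h'.1] at he
    have := w⁻¹.injective he
    omega

/-! ### Indexing of the sets of simple roots -/

lemma sroot_injective : Function.Injective sroot := by
  -- The only positive index at which `αᵢ` takes the value `1` is `i + 1`.
  have key : ∀ i n : ℕ, sroot i ((n : ℤ) + 1) = 1 ↔ n = i := by
    intro i n
    rcases i with _ | i
    · simp only [sroot, evec]
      split_ifs <;> first | omega | (norm_num; omega)
    · simp only [sroot, evec, Pi.sub_apply]
      split_ifs <;> first | omega | (norm_num; omega)
  intro i j hij
  have h := (key i i).2 rfl
  rw [hij, key] at h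
  exact h

lemma sroot_mem_Atil {r a i : ℕ} (hi : i < r) (hia : i ≠ a) : sroot i ∈ Atil r a := by
  unfold Atil
  split_ifs
  · exact ⟨i, hi, rfl⟩
  · exact ⟨⟨i, hi, rfl⟩, fun h => hia (sroot_injective h)⟩

lemma sroot_mem_Aset {r a i : ℕ} (h1 : 1 ≤ i) (hi : i < r) (hia : i ≠ a) :
    sroot i ∈ Aset r a :=
  ⟨sroot_mem_Atil hi hia, fun h => by have := sroot_injective h; omega⟩

lemma exists_of_mem_Aset {r a : ℕ} {x : ℤ → ℚ} (h : x ∈ Aset r a) :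
    ∃ i, 1 ≤ i ∧ i < r ∧ i ≠ a ∧ x = sroot i := by
  obtain ⟨h, h0⟩ := h
  unfold Atil at h
  split_ifs at h with har
  · obtain ⟨i, hi, rfl⟩ := h
    exact ⟨i, Nat.one_le_iff_ne_zero.2 fun e => h0 (e ▸ rfl), hi, by omega, rfl⟩
  · obtain ⟨⟨i, hi, rfl⟩, h⟩ := h
    exact ⟨i, Nat.one_le_iff_ne_zero.2 fun e => h0 (e ▸ rfl), hi, fun e => h (e ▸ rfl), rfl⟩

lemma exists_of_mem_Jset {l1 l2 : List ℕ} {x : ℤ → ℚ} (h : x ∈ Jset l1 l2) :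
    ∃ i, 1 ≤ i ∧ i < l1.sum + l2.sum ∧ i ≠ l1.sum ∧ x = sroot i := by
  rcases h with ⟨j, h1, h2, -, rfl⟩ | ⟨j, h1, h2, -, rfl⟩
  · exact ⟨0 + j, by omega, by omega, by omega, rfl⟩
  · exact ⟨l1.sum + j, by omega, by omega, by omega, rfl⟩

/-! ### Blocks -/

lemma Wpar_preserves_blocks {r a : ℕ} {v : G} (hv : v ∈ Wpar r (Aset r a)) (x : ℤ) :
    (1 ≤ v x ∧ v x ≤ a ↔ 1 ≤ x ∧ x ≤ a) ∧ (a < v x ∧ v x ≤ r ↔ a < x ∧ x ≤ r) := by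
  induction hv using Subgroup.closure_induction generalizing x with
  | mem w hw =>
    obtain ⟨i, hir, hi, rfl⟩ := hw
    obtain ⟨i', h1, h2, h3, he⟩ := exists_of_mem_Aset hi
    obtain rfl := sroot_injective he
    rw [s, if_neg (by omega), Equiv.Perm.mul_apply, Equiv.swap_apply_def, Equiv.swap_apply_def]
    split_ifs <;> omega
  | one => simp
  | mul w w' _ _ h h' =>
    have h1 := h (w' x)
    have h2 := h' x
    rw [Equiv.Perm.mul_apply]
    exact ⟨h1.1.trans h2.1, h1.2.trans h2.2⟩
  | inv w _ h =>
    have := h (w⁻¹ x)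
    rw [show w (w⁻¹ x) = x by simp] at this
    exact ⟨this.1.symm, this.2.symm⟩

lemma lt_of_lt_succ {g : ℤ → ℤ} {lo hi : ℤ} (h : ∀ k, lo ≤ k → k < hi → g k < g (k + 1))
    {x y : ℤ} (hx : lo ≤ x) (hxy : x < y) (hy : y ≤ hi) : g x < g y := by
  have key : ∀ y, x + 1 ≤ y → y ≤ hi → g x < g y := by
    intro y hxy
    induction y, hxy using Int.leInduction with
    | base => intro hy; exact h x hx (by omega)
    | succ k hk ih => intro hy; exact (ih (by omega)).trans (h k (by omega) (by omega))
  exact key y hxy hy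

/-- An element `d` with `d⁻¹ ∈ D_Ã` is increasing on `[1, a]` and on `[a+1, r]`. -/
lemma increasing_on_blocks {r a : ℕ} {d : G} (hd : d⁻¹ ∈ DD r (Atil r a)) {x y : ℤ}
    (hxy : x < y) (hb : 1 ≤ x ∧ y ≤ a ∧ y ≤ r ∨ a < x ∧ y ≤ r) : d x < d y := by
  have step : ∀ k : ℤ, 1 ≤ k → k < r → k ≠ a → d k < d (k + 1) := by
    intro k h1 h2 h3
    lift k to ℕ using by omega
    have := hd.2 _ (sroot_mem_Atil (r := r) (a := a) (i := k) (by omega) (by omega))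
    rw [isPos_rAct_sroot hd.1 (by omega) (by omega), inv_inv] at this
    exact this
  rcases hb with ⟨h1, h2, h3⟩ | ⟨h1, h2⟩
  · exact lt_of_lt_succ (lo := 1) (hi := y)
      (fun k _ _ => step k (by omega) (by omega) (by omega)) h1 hxy le_rfl
  · exact lt_of_lt_succ (lo := x) (hi := y)
      (fun k _ _ => step k (by omega) (by omega) (by omega)) le_rfl hxy le_rfl

/-- Let `f = d⁻¹` for `d ∈ D_{B̃,Ã}`, and let `αᵢ ∈ B`.  If `f i` and `f (i+1)` both lie in
`[1, a]`, in `[a+1, r]`, or in the negative of one of these, they are consecutive. -/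
lemma succ_of_same_block {r a i : ℕ} {d : G} (hd : inW r d) (hd' : d⁻¹ ∈ DD r (Atil r a))
    (hlt : d⁻¹ i < d⁻¹ (i + 1))
    (hb : (1 ≤ d⁻¹ i ∧ d⁻¹ (i + 1) ≤ a ∧ d⁻¹ (i + 1) ≤ r ∨ a < d⁻¹ i ∧ d⁻¹ (i + 1) ≤ r) ∨
      (1 ≤ -d⁻¹ (i + 1) ∧ -d⁻¹ i ≤ a ∧ -d⁻¹ i ≤ r ∨ a < -d⁻¹ (i + 1) ∧ -d⁻¹ i ≤ r)) :
    d⁻¹ (i + 1) = d⁻¹ i + 1 := by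
  have e1 : d (d⁻¹ i) = i := by simp
  have e2 : d (d⁻¹ (i + 1)) = i + 1 := by simp
  generalize d⁻¹ (i : ℤ) = p at *
  generalize d⁻¹ ((i : ℤ) + 1) = q at *
  by_contra hne
  rcases hb with hb | hb
  · have h1 := increasing_on_blocks hd' (x := p) (y := p + 1) (by omega) (by omega)
    have h2 := increasing_on_blocks hd' (x := p + 1) (y := q) (by omega) (by omega)
    omega
  · have h1 := increasing_on_blocks hd' (x := -q) (y := -(p + 1)) (by omega) (by omega)
    have h2 := increasing_on_blocks hd' (x := -(p + 1)) (y := -p) (by omega) (by omega)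
    rw [hd.1, hd.1] at h1 h2
    omega

/-- Let `(d,v,u)` be an admissible triple for `(λ,μ)`.  Then `dv⁻¹ ∈ D_{B,J}`, i.e. `dv⁻¹` is a distinguished double `(W_B, W_J)`-coset representative in `W_r`. -/
theorem dv_inv_mem_dist (n r a b : ℕ) (l1 l2 m1 m2 : List ℕ)
    (hla : l1.sum = a) (hlr : l1.sum + l2.sum = r) (hln : l1.length + l2.length = n)
    (hmb : m1.sum = b) (hmr : m1.sum + m2.sum = r) (hmn : m1.length + m2.length = n)
    (d v u : G) (hadm : Admissible r a b l1 l2 m1 m2 d v u) :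
    d * v⁻¹ ∈ DDd r (Aset r b) (Jset l1 l2) := by
  obtain ⟨⟨hdB, hdA⟩, ⟨⟨hvJ, hvL⟩, hvW⟩, -⟩ := hadm
  have hd := hdB.1
  have hv := hvJ.1
  have hw := inW_mul hd (inW_inv hv)
  refine ⟨⟨hw, ?_⟩, ⟨inW_inv hw, ?_⟩⟩
  · intro α hα
    obtain ⟨i, h1, hir, hib, rfl⟩ := exists_of_mem_Aset hα
    rw [isPos_rAct_sroot hw h1 hir, mul_inv_rev, inv_inv, Equiv.Perm.mul_apply,
      Equiv.Perm.mul_apply]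
    have hlt : d⁻¹ i < d⁻¹ (i + 1) :=
      (isPos_rAct_sroot hd h1 hir).1 (hdB.2 _ (sroot_mem_Atil hir hib))
    have hsucc := succ_of_same_block hd hdA hlt
    have hroot := rAct_sroot hd h1
    have hd' := inW_inv hd
    have hp0 := inW_ne_zero hd' (i := i) (by omega)
    have hq0 := inW_ne_zero hd' (i := i + 1) (by omega)
    have hpr := inW_abs_le hd' (i := i) (by rw [abs_le]; omega)
    have hqr := inW_abs_le hd' (i := i + 1) (by rw [abs_le]; omega)
    rw [abs_le] at hpr hqr
    generalize d⁻¹ (i : ℤ) = p at *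
    generalize d⁻¹ ((i : ℤ) + 1) = q at *
    -- The hypothesis `v⁻¹ ∈ D_{B·d ∩ A}`, applied to `αᵢ·d` when it is some `α_k ∈ A`.
    have hstep : ∀ k : ℕ, 1 ≤ k → k < r → k ≠ a → sv q - sv p = sroot k →
        v k < v (k + 1) := by
      intro k hk1 hkr hka he
      have := hvL.2 (sroot k) ⟨⟨_, hα, hroot.trans he⟩, sroot_mem_Aset hk1 hkr hka⟩
      rwa [isPos_rAct_sroot (inW_inv hv) hk1 hkr, inv_inv] at this
    by_cases hb : (1 ≤ p ∧ q ≤ a ∧ q ≤ r ∨ a < p ∧ q ≤ r) ∨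
        (1 ≤ -q ∧ -p ≤ a ∧ -p ≤ r ∨ a < -q ∧ -p ≤ r)
    · obtain rfl := hsucc hb
      by_cases hpos : 1 ≤ p
      · lift p to ℕ using by omega
        exact hstep p (by omega) (by omega) (by omega) (sroot_eq_sv (by omega)).symm
      · obtain ⟨k, hk⟩ : ∃ k : ℕ, p = -((k : ℤ) + 1) := ⟨(-p - 1).toNat, by omega⟩
        subst hk
        have e : -((k : ℤ) + 1) + 1 = -k := by ring
        rw [e] at hstep ⊢
        have := hstep k (by omega) (by omega) (by omega) (by
          rw [sroot_eq_sv (by omega), sv_neg (by omega), sv_neg (by omega)]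
          abel)
        rw [hv.1, hv.1]
        omega
    · have b1 := Wpar_preserves_blocks hvW p
      have b2 := Wpar_preserves_blocks hvW q
      have b3 := Wpar_preserves_blocks hvW (-p)
      have b4 := Wpar_preserves_blocks hvW (-q)
      rw [hv.1] at b3 b4
      omega
  · intro α hα
    obtain ⟨j, h1, hjr, hja, rfl⟩ := exists_of_mem_Jset hα
    rw [hlr] at hjr
    rw [hla] at hja
    rw [isPos_rAct_sroot (inW_inv hw) h1 hjr, inv_inv, Equiv.Perm.mul_apply,
      Equiv.Perm.mul_apply]
    have hlt : v⁻¹ j < v⁻¹ (j + 1) := (isPos_rAct_sroot hv h1 hjr).1 (hvJ.2 _ hα)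
    have b1 := Wpar_preserves_blocks (inv_mem hvW) j
    have b2 := Wpar_preserves_blocks (inv_mem hvW) (j + 1)
    exact increasing_on_blocks hdA hlt (by omega)

end QQS
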